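/- Let K be an algebraically closed field, n ≥ 2 and 1 ≤ c ≤ n an integer. In the polynomial ring K[T_{ij} : 0 ≤ i < j ≤ n+2], the ideal generated by the elements −T_{ik}T_{jl} + T_{il}T_{jk} for all 0 ≤ i < j ≤ c < k < l ≤ n+2, together with the full Plücker relations T_{ij}T_{kl} − T_{ik}T_{jl} + T_{il}T_{jk} for all remaining quadruples 0 ≤ i < j < k < l ≤ n+2 (i.e. those not satisfying j ≤ c < k), is a prime ideal. -/

import Mathlib

open MvPolynomial

/-- The index set of the polynomial ring `K[T_{ij} : 0 ≤ i < j ≤ n+2]`. -/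
abbrev PairIdx (n : ℕ) : Type := {p : ℕ × ℕ // p.1 < p.2 ∧ p.2 ≤ n + 2}

/-- The variable `T_{ab}` of `K[T_{ij} : 0 ≤ i < j ≤ n+2]` (junk value `0` for
invalid index pairs). -/
noncomputable def T (K : Type*) [Field K] (n a b : ℕ) :
    MvPolynomial (PairIdx n) K :=
  if h : a < b ∧ b ≤ n + 2 then X ⟨(a, b), h⟩ else 0

open OrderDual in
/-- row variable -/
def rowV (a : ℕ) : ℕᵒᵈ := toDual (2 * a)

open OrderDual in
/-- column variable -/
def colV (a : ℕ) : ℕᵒᵈ := toDual (2 * a + 1)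

theorem rowV_inj (a b : ℕ) : rowV a = rowV b ↔ a = b := by
  simp [rowV]

theorem colV_inj (a b : ℕ) : colV a = colV b ↔ a = b := by
  simp [colV]

theorem rowV_ne (a b : ℕ) : rowV a ≠ colV b := by
  simp only [rowV, colV, ne_eq, EmbeddingLike.apply_eq_iff_eq]; omega

/-- nonnesting exponents -/
def StdE {n : ℕ} (m : PairIdx n →₀ ℕ) : Prop :=
  ∀ p q : PairIdx n, m p ≠ 0 → m q ≠ 0 → ¬ (p.1.1 < q.1.1 ∧ q.1.2 < p.1.2)

/-- leading exponent of a variable -/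
noncomputable def leadV {n : ℕ} (p : PairIdx n) : ℕᵒᵈ →₀ ℕ :=
  Finsupp.single (rowV p.1.1) 1 + Finsupp.single (colV p.1.2) 1

theorem leadV_row {n : ℕ} (p : PairIdx n) (a : ℕ) :
    leadV p (rowV a) = if p.1.1 = a then 1 else 0 := by
  simp [leadV, Finsupp.single_apply, rowV_inj, (rowV_ne _ _).symm]

theorem leadV_col {n : ℕ} (p : PairIdx n) (a : ℕ) :
    leadV p (colV a) = if p.1.2 = a then 1 else 0 := by
  simp [leadV, Finsupp.single_apply, colV_inj, rowV_ne]

/-- leading exponent of a monomial -/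
noncomputable def leadM {n : ℕ} (m : PairIdx n →₀ ℕ) : ℕᵒᵈ →₀ ℕ :=
  m.sum fun p k => k • leadV p

theorem leadM_apply {n : ℕ} (m : PairIdx n →₀ ℕ) (s : Finset (PairIdx n))
    (hs : m.support ⊆ s) (x : ℕᵒᵈ) :
    leadM m x = ∑ p ∈ s, m p * leadV p x := by
  rw [leadM, Finsupp.sum_of_support_subset m hs _ (by simp), Finsupp.finsetSum_apply]
  simp

theorem exists_gt_of_marg {n : ℕ} (m m' : PairIdx n →₀ ℕ) (h : leadM m = leadM m')
    (x : ℕᵒᵈ) (q : PairIdx n) (hx : leadV q x = 1) (hq : m' q < m q) :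
    ∃ p, leadV p x ≠ 0 ∧ m p < m' p := by
  classical
  by_contra hcon
  push Not at hcon
  have h1 := leadM_apply m (m.support ∪ m'.support) Finset.subset_union_left x
  have h2 := leadM_apply m' (m.support ∪ m'.support) Finset.subset_union_right x
  have : ∑ p ∈ m.support ∪ m'.support, m' p * leadV p x
      < ∑ p ∈ m.support ∪ m'.support, m p * leadV p x := by
    apply Finset.sum_lt_sum
    · intro p _
      by_cases hp : leadV p x = 0
      · simp [hp]
      · exact Nat.mul_le_mul_right _ (hcon p hp)
    · refine ⟨q, ?_, ?_⟩
      · simp only [Finset.mem_union, Finsupp.mem_support_iff]; left; omega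
      · rw [hx]; omega
  rw [← h1, ← h2, h] at this
  exact lt_irrefl _ this

theorem std_aux {n : ℕ} (m m' : PairIdx n →₀ ℕ) (hm' : StdE m')
    (h : leadM m = leadM m') (q : PairIdx n)
    (hmin : ∀ p, m p ≠ m' p → toLex q.1 ≤ toLex p.1) (hq : m' q < m q) : False := by
  obtain ⟨p, hp, hpm⟩ := exists_gt_of_marg m m' h (rowV q.1.1) q (by simp [leadV_row]) hq
  obtain ⟨r, hr, hrm⟩ := exists_gt_of_marg m m' h (colV q.1.2) q (by simp [leadV_col]) hq
  have hp1 : p.1.1 = q.1.1 := by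
    by_contra hh; simp [leadV_row, hh] at hp
  have hr1 : r.1.2 = q.1.2 := by
    by_contra hh; simp [leadV_col, hh] at hr
  have h3 := hmin p (by omega)
  have h4 := hmin r (by omega)
  rw [Prod.Lex.toLex_le_toLex] at h3 h4
  have h5 : p.1.2 ≠ q.1.2 := by
    intro hh
    have : p = q := Subtype.ext (Prod.ext hp1 hh)
    subst this; omega
  have h6 : r.1.1 ≠ q.1.1 := by
    intro hh
    have : r = q := Subtype.ext (Prod.ext hh hr1)
    subst this; omega
  exact hm' p r (by omega) (by omega) (by omega)

theorem std_inj {n : ℕ} (m m' : PairIdx n →₀ ℕ) (hm : StdE m) (hm' : StdE m')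
    (h : leadM m = leadM m') : m = m' := by
  classical
  by_contra hne
  obtain ⟨p, hp⟩ := Finsupp.ne_iff.mp hne
  obtain ⟨q, hq, hmin⟩ := Finset.exists_min_image
    ((m.support ∪ m'.support).filter fun p => m p ≠ m' p) (fun p => toLex p.1)
    ⟨p, by simp only [Finset.mem_filter, Finset.mem_union, Finsupp.mem_support_iff]; omega⟩
  have hmin' : ∀ p, m p ≠ m' p → toLex q.1 ≤ toLex p.1 := fun p hp => hmin p (by
    simp only [Finset.mem_filter, Finset.mem_union, Finsupp.mem_support_iff]; omega)
  have hq' : m q ≠ m' q := (Finset.mem_filter.mp hq).2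
  rcases lt_or_gt_of_ne hq' with h1 | h1
  · exact std_aux m' m hm h.symm q (fun p hp => hmin' p hp.symm) h1
  · exact std_aux m m' hm' h q hmin' h1

/-- image of a variable -/
noncomputable def imV (K : Type*) [Field K] (c a b : ℕ) : MvPolynomial ℕᵒᵈ K :=
  X (rowV a) * X (colV b) - (if a ≤ c ∧ c < b then 0 else X (rowV b) * X (colV a))

theorem XX_eq (K : Type*) [Field K] (x y : ℕᵒᵈ) :
    (X x * X y : MvPolynomial ℕᵒᵈ K)
      = monomial (Finsupp.single x 1 + Finsupp.single y 1) 1 := by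
  simp [X, monomial_mul]

theorem imV_lead (K : Type*) [Field K] (n c : ℕ) (p : PairIdx n) :
    MonomialOrder.lex.degree (imV K c p.1.1 p.1.2) = leadV p ∧
    MonomialOrder.lex.Monic (imV K c p.1.1 p.1.2) := by
  classical
  unfold imV
  split_ifs with h
  · rw [sub_zero, XX_eq]
    exact ⟨by rw [MonomialOrder.degree_monomial, if_neg one_ne_zero]; rfl,
      MonomialOrder.monic_monomial_one⟩
  · have hp := p.2.1
    have key : MonomialOrder.lex.toSyn (MonomialOrder.lex.degree
        (X (rowV p.1.2) * X (colV p.1.1) : MvPolynomial ℕᵒᵈ K)) <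
        MonomialOrder.lex.toSyn (MonomialOrder.lex.degree
        (X (rowV p.1.1) * X (colV p.1.2) : MvPolynomial ℕᵒᵈ K)) := by
      rw [XX_eq, XX_eq, MonomialOrder.degree_monomial, MonomialOrder.degree_monomial,
        if_neg one_ne_zero, if_neg one_ne_zero, MonomialOrder.lex_lt_iff, Finsupp.Lex.lt_iff]
      refine ⟨colV p.1.2, ?_, ?_⟩
      · intro j hj
        have h1 : 2 * p.1.2 + 1 < OrderDual.ofDual j := hj
        have e1 : ∀ a, a ≤ p.1.2 → rowV a ≠ j := by
          intro a ha hh; subst hh; simp [rowV] at h1; omega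
        have e2 : ∀ a, a ≤ p.1.2 → colV a ≠ j := by
          intro a ha hh; subst hh; simp [colV] at h1; omega
        simp [Finsupp.single_apply, e1 _ hp.le, e2 _ hp.le, e1 _ le_rfl, e2 _ le_rfl]
      · simp [Finsupp.single_apply, rowV_ne, colV_inj, hp.ne]
    refine ⟨?_, ?_⟩
    · rw [MonomialOrder.degree_sub_of_lt key, XX_eq, MonomialOrder.degree_monomial,
        if_neg one_ne_zero]; rfl
    · rw [MonomialOrder.Monic, MonomialOrder.leadingCoeff_sub_of_lt key, XX_eq]
      exact MonomialOrder.monic_monomial_one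

/-- the parametrization -/
noncomputable def parM (K : Type*) [Field K] (n c : ℕ) :
    MvPolynomial (PairIdx n) K →ₐ[K] MvPolynomial ℕᵒᵈ K :=
  aeval fun p => imV K c p.1.1 p.1.2

theorem parM_lead (K : Type*) [Field K] (n c : ℕ) (m : PairIdx n →₀ ℕ) :
    MonomialOrder.lex.degree (parM K n c (monomial m 1)) = leadM m ∧
    MonomialOrder.lex.Monic (parM K n c (monomial m 1)) := by
  rw [parM, aeval_monomial, map_one, one_mul, Finsupp.prod]
  constructor
  · rw [MonomialOrder.degree_prod]
    · simp only [MonomialOrder.degree_pow, (imV_lead K n c _).1]; rfl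
    · intro p _
      exact pow_ne_zero _ (imV_lead K n c p).2.ne_zero
  · exact MonomialOrder.Monic.prod fun p _ => (imV_lead K n c p).2.pow

theorem std_indep (K : Type*) [Field K] (n c : ℕ) (g : MvPolynomial (PairIdx n) K)
    (hg : ∀ d ∈ g.support, StdE d) (h0 : parM K n c g = 0) : g = 0 := by
  classical
  by_contra hne
  obtain ⟨m, hm, hmax⟩ := Finset.exists_max_image g.support
    (fun d => MonomialOrder.lex.toSyn (leadM d)) (support_nonempty.mpr hne)
  have h1 : coeff (leadM m) (parM K n c g) = coeff m g := by
    conv_lhs => rw [g.as_sum, map_sum, coeff_sum]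
    rw [Finset.sum_eq_single m]
    · have : monomial m (coeff m g) = coeff m g • monomial m (1 : K) := by
        simp [smul_monomial]
      rw [this, map_smul, coeff_smul, ← (parM_lead K n c m).1,
        (parM_lead K n c m).2.coeff_degree]
      simp
    · intro d hd hdm
      have : monomial d (coeff d g) = coeff d g • monomial d (1 : K) := by
        simp [smul_monomial]
      rw [this, map_smul, coeff_smul]
      suffices hz : coeff (leadM m) (parM K n c (monomial d 1)) = 0 by rw [hz, smul_zero]
      apply MonomialOrder.coeff_eq_zero_of_lt (m := MonomialOrder.lex)
      rw [(parM_lead K n c d).1]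
      refine lt_of_le_of_ne (hmax d hd) ?_
      intro hh
      exact hdm (std_inj d m (hg d hd) (hg m hm) (MonomialOrder.lex.toSyn.injective hh))
    · intro hh; exact absurd hm hh
  rw [h0, coeff_zero] at h1
  exact (mem_support_iff.mp hm) h1.symm

/-- the ideal -/
noncomputable def theI (K : Type*) [Field K] (n c : ℕ) : Ideal (MvPolynomial (PairIdx n) K) :=
    (Ideal.span
      ({x : MvPolynomial (PairIdx n) K | ∃ i j k l : ℕ,
          i < j ∧ j ≤ c ∧ c < k ∧ k < l ∧ l ≤ n + 2 ∧
          x = - T K n i k * T K n j l + T K n i l * T K n j k}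
        ∪ {x : MvPolynomial (PairIdx n) K | ∃ i j k l : ℕ,
          i < j ∧ j < k ∧ k < l ∧ l ≤ n + 2 ∧ ¬(j ≤ c ∧ c < k) ∧
          x = T K n i j * T K n k l - T K n i k * T K n j l
            + T K n i l * T K n j k}))

theorem T_eq (K : Type*) [Field K] (n a b : ℕ) (h : a < b ∧ b ≤ n + 2) :
    T K n a b = X ⟨(a, b), h⟩ := by simp [T, h]

theorem parM_T (K : Type*) [Field K] (n c a b : ℕ) (h : a < b) (h' : b ≤ n + 2) :
    parM K n c (T K n a b) = imV K c a b := by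
  rw [T_eq K n a b ⟨h, h'⟩, parM, aeval_X]

theorem theI_le (K : Type*) [Field K] (n c : ℕ) :
    theI K n c ≤ RingHom.ker (parM K n c) := by
  rw [theI, Ideal.span_le]
  rintro x (⟨i, j, k, l, h1, h2, h3, h4, h5, rfl⟩ | ⟨i, j, k, l, h1, h2, h3, h4, h5, rfl⟩)
  · simp only [SetLike.mem_coe, RingHom.mem_ker, map_add, map_mul, map_neg]
    rw [parM_T K n c i k (by omega) (by omega), parM_T K n c j l (by omega) (by omega),
      parM_T K n c i l (by omega) (by omega), parM_T K n c j k (by omega) (by omega)]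
    simp only [imV]
    rw [if_pos (by omega), if_pos (by omega), if_pos (by omega), if_pos (by omega)]
    ring
  · simp only [SetLike.mem_coe, RingHom.mem_ker, map_add, map_mul, map_sub]
    rw [parM_T K n c i k (by omega) (by omega), parM_T K n c j l (by omega) (by omega),
      parM_T K n c i l (by omega) (by omega), parM_T K n c j k (by omega) (by omega),
      parM_T K n c i j (by omega) (by omega), parM_T K n c k l (by omega) (by omega)]
    simp only [imV]
    split_ifs <;> first | omega | ring

theorem weight_pair {n : ℕ} (p q : PairIdx n) :
    Finsupp.weight (fun p : PairIdx n => (p.1.2 - p.1.1) ^ 2)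
      (Finsupp.single p 1 + Finsupp.single q 1)
      = (p.1.2 - p.1.1) ^ 2 + (q.1.2 - q.1.1) ^ 2 := by
  simp [Finsupp.weight_single]

theorem spanning (K : Type*) [Field K] (n c : ℕ) (N : ℕ) : ∀ m : PairIdx n →₀ ℕ,
    Finsupp.weight (fun p : PairIdx n => (p.1.2 - p.1.1) ^ 2) m = N →
    (monomial m (1 : K)) ∈ (theI K n c).restrictScalars K ⊔ restrictSupport K {d | StdE d} := by
  classical
  induction N using Nat.strong_induction_on with
  | _ N ih =>
  intro m hm
  by_cases hs : StdE m
  · apply Submodule.mem_sup_right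
    rw [mem_restrictSupport_iff]
    intro d hd
    have := support_monomial_subset hd
    simp only [Finset.mem_singleton] at this
    subst this; exact hs
  · simp only [StdE, not_forall, not_not] at hs
    obtain ⟨⟨⟨i, l⟩, hil⟩, ⟨⟨j, k⟩, hjk⟩, hp, hq, h1, h2⟩ := hs
    simp only at h1 h2 hil hjk
    set p : PairIdx n := ⟨(i, l), hil⟩ with hpd
    set q : PairIdx n := ⟨(j, k), hjk⟩ with hqd
    have hpq : p ≠ q := by
      intro hh
      have := congrArg (fun z : PairIdx n => z.1.1) hh
      simp [hpd, hqd] at this; omega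
    obtain ⟨m', rfl⟩ : ∃ m', m = m' + (Finsupp.single p 1 + Finsupp.single q 1) := by
      refine ⟨m - (Finsupp.single p 1 + Finsupp.single q 1), (tsub_add_cancel_of_le ?_).symm⟩
      intro z
      simp only [Finsupp.add_apply, Finsupp.single_apply]
      split_ifs with e1 e2 e2
      · exact absurd (e1.trans e2.symm) hpq
      · subst e1; omega
      · subst e2; omega
      · omega
    have hw : (k - i) ^ 2 + (l - j) ^ 2 < (l - i) ^ 2 + (k - j) ^ 2 ∧
        (j - i) ^ 2 + (l - k) ^ 2 < (l - i) ^ 2 + (k - j) ^ 2 := by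
      obtain ⟨a, rfl⟩ := Nat.exists_eq_add_of_lt h1
      obtain ⟨b, rfl⟩ := Nat.exists_eq_add_of_lt hjk.1
      obtain ⟨d, rfl⟩ := Nat.exists_eq_add_of_lt h2
      have e1 : i + a + 1 + b + 1 - i = a + b + 2 := by omega
      have e2 : i + a + 1 + b + 1 + d + 1 - (i + a + 1) = b + d + 2 := by omega
      have e3 : i + a + 1 + b + 1 + d + 1 - i = a + b + d + 3 := by omega
      have e4 : i + a + 1 + b + 1 - (i + a + 1) = b + 1 := by omega
      have e5 : i + a + 1 - i = a + 1 := by omega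
      have e6 : i + a + 1 + b + 1 + d + 1 - (i + a + 1 + b + 1) = d + 1 := by omega
      rw [e1, e2, e3, e4, e5, e6]
      constructor <;> nlinarith [Nat.zero_le (a * d), Nat.zero_le (a * b), Nat.zero_le (b * d)]
    rw [map_add, weight_pair] at hm
    simp only [hpd, hqd] at hm
    have hik : i < k ∧ k ≤ n + 2 := by omega
    have hjl : j < l ∧ l ≤ n + 2 := by omega
    have hij : i < j ∧ j ≤ n + 2 := by omega
    have hkl : k < l ∧ l ≤ n + 2 := by omega
    have A := ih _ (by rw [← hm]; rw [map_add, weight_pair]; simp only; omega)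
      (m' + (Finsupp.single (⟨(i, k), hik⟩ : PairIdx n) 1
        + Finsupp.single (⟨(j, l), hjl⟩ : PairIdx n) 1)) rfl
    have B := ih _ (by rw [← hm]; rw [map_add, weight_pair]; simp only; omega)
      (m' + (Finsupp.single (⟨(i, j), hij⟩ : PairIdx n) 1
        + Finsupp.single (⟨(k, l), hkl⟩ : PairIdx n) 1)) rfl
    have mon : ∀ a b : PairIdx n, monomial (m' + (Finsupp.single a 1 + Finsupp.single b 1)) (1 : K)
        = monomial m' 1 * (X a * X b) := by
      intro a b; simp [X, monomial_mul]
    rw [mon, ← T_eq, ← T_eq] at A B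
    rw [mon, hpd, hqd, ← T_eq, ← T_eq]
    by_cases hc : j ≤ c ∧ c < k
    · have G : - T K n i k * T K n j l + T K n i l * T K n j k ∈ theI K n c :=
        Ideal.subset_span (Or.inl ⟨i, j, k, l, h1, hc.1, hc.2, h2, hil.2, rfl⟩)
      have G' := Submodule.mem_sup_left (T := restrictSupport K {d : PairIdx n →₀ ℕ | StdE d})
        ((Submodule.restrictScalars_mem K _ _).mpr (Ideal.mul_mem_left _ (monomial m' 1) G))
      convert Submodule.add_mem _ G' A using 1
      ring
    · have G : T K n i j * T K n k l - T K n i k * T K n j l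
            + T K n i l * T K n j k ∈ theI K n c :=
        Ideal.subset_span (Or.inr ⟨i, j, k, l, h1, hjk.1, h2, hil.2, hc, rfl⟩)
      have G' := Submodule.mem_sup_left (T := restrictSupport K {d : PairIdx n →₀ ℕ | StdE d})
        ((Submodule.restrictScalars_mem K _ _).mpr (Ideal.mul_mem_left _ (monomial m' 1) G))
      convert Submodule.sub_mem _ (Submodule.add_mem _ G' A) B using 1
      ring

theorem theI_eq (K : Type*) [Field K] (n c : ℕ) :
    theI K n c = RingHom.ker (parM K n c) := by
  refine le_antisymm (theI_le K n c) ?_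
  intro f hf
  have hmem : f ∈ (theI K n c).restrictScalars K ⊔ restrictSupport K {d | StdE d} := by
    rw [f.as_sum]
    refine Submodule.sum_mem _ fun d _ => ?_
    have : monomial d (coeff d f) = coeff d f • monomial d (1 : K) := by
      simp [smul_monomial]
    rw [this]
    exact Submodule.smul_mem _ _ (spanning K n c _ d rfl)
  obtain ⟨y, hy, g, hg, rfl⟩ := Submodule.mem_sup.mp hmem
  have hy' : y ∈ theI K n c := hy
  have hyk := theI_le K n c hy'
  rw [RingHom.mem_ker] at hf hyk
  have : g = 0 := by
    apply std_indep K n c g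
    · intro d hd
      exact (mem_restrictSupport_iff ..).mp hg hd
    · rw [map_add] at hf
      simpa [hyk] using hf
  rw [this, add_zero]; exact hy'

/-- Let `1 ≤ c ≤ n`. In `K[T_{ij} : 0 ≤ i < j ≤ n+2]` the elements
`−T_{ik}T_{jl} + T_{il}T_{jk}` for `0 ≤ i < j ≤ c < k < l ≤ n+2` together with
the Plücker relations `T_{ij}T_{kl} − T_{ik}T_{jl} + T_{il}T_{jk}` for all the
remaining quadruples `0 ≤ i < j < k < l ≤ n+2` generate a prime ideal. -/
theorem stmt7 (K : Type*) [Field K] [IsAlgClosed K] (n c : ℕ)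
    (hn : 2 ≤ n) (hc1 : 1 ≤ c) (hcn : c ≤ n) :
    (Ideal.span
      ({x : MvPolynomial (PairIdx n) K | ∃ i j k l : ℕ,
          i < j ∧ j ≤ c ∧ c < k ∧ k < l ∧ l ≤ n + 2 ∧
          x = - T K n i k * T K n j l + T K n i l * T K n j k}
        ∪ {x : MvPolynomial (PairIdx n) K | ∃ i j k l : ℕ,
          i < j ∧ j < k ∧ k < l ∧ l ≤ n + 2 ∧ ¬(j ≤ c ∧ c < k) ∧
          x = T K n i j * T K n k l - T K n i k * T K n j l
            + T K n i l * T K n j k})).IsPrime := by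
  have h := theI_eq K n c
  rw [theI] at h
  rw [h]
  exact RingHom.ker_isPrime _
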